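/- Let Λ be a right artinian ring with identity having, up to isomorphism, only finitely many finitely generated indecomposable right Λ-modules. Let U be the direct sum of a complete set of representatives of the finitely generated indecomposable right Λ-modules, and let W be the direct sum of the injective hulls of a complete set of representatives of the simple right Λ-modules; assume W is a finitely generated Λ-module. Set R = End_Λ(U) and view Hom_Λ(U, W) as a right R-module via precomposition. Then Hom_Λ(U, W) is a minimal faithful right R-module and it is balanced, i.e., the canonical ring homomorphism R → End_S(Hom_Λ(U, W)) is surjective, where S = End_R(Hom_Λ(U, W)). -/

import Mathlib

/-!
STATEMENT 8 (Lemma `l6` of the paper).  Λ right artinian with finitely many finitely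
generated indecomposable right modules, `U` the direct sum of a complete set of
representatives of these, `W` the (finitely generated) direct sum of the injective hulls of a
complete set of representatives of the simple right Λ-modules, `R = End_Λ(U)`.  Then
`Hom_Λ(U, W)` is a minimal faithful balanced right `R`-module.

Right Λ-modules are formalized as left `Λᵐᵒᵖ`-modules; `R = End_Λ(U)` is then Mathlib's
`Module.End Λᵐᵒᵖ U`, and the right `R`-module `Hom_Λ(U, W)` (action by precomposition) is a
left `Rᵐᵒᵖ`-module.  Balancedness is formalized as surjectivity of the canonical map
`R → End_S(Hom_Λ(U, W))`, `S = End_R(Hom_Λ(U, W))`.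
-/

universe u

section Defs

variable (R : Type u) [Ring R]

/-- A family of submodules realizes `M` as an internal direct sum. -/
def IsInternalDirectSum {ι : Type*} {M : Type*} [AddCommGroup M] [Module R M]
    (N : ι → Submodule R M) : Prop :=
  iSupIndep N ∧ (⨆ i, N i) = ⊤

/-- A module is indecomposable if it is nonzero and is not the internal direct sum of two
nonzero submodules. -/
def IsIndecomposableModule (M : Type*) [AddCommGroup M] [Module R M] : Prop :=
  Nontrivial M ∧ ∀ N₁ N₂ : Submodule R M, IsCompl N₁ N₂ → N₁ = ⊥ ∨ N₂ = ⊥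

/-- A ring has finite representation type if it is left artinian and has, up to isomorphism,
only finitely many finitely generated indecomposable left modules. -/
def HasFiniteRepresentationType : Prop :=
  IsArtinian R R ∧
    ∃ (n : ℕ) (M : Fin n → ModuleCat.{u} R),
      (∀ i, Module.Finite R (M i) ∧ IsIndecomposableModule R (M i)) ∧
      ∀ X : ModuleCat.{u} R, Module.Finite R X → IsIndecomposableModule R X →
        ∃ i, Nonempty (X ≃ₗ[R] M i)

/-- `V` is the direct sum of a complete set of representatives of the isomorphism classes of
finitely generated indecomposable left `R`-modules. -/
def IsSumOfAllIndecomposables (V : Type u) [AddCommGroup V] [Module R V] : Prop :=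
  ∃ (ι : Type u) (N : ι → Submodule R V),
    IsInternalDirectSum R N ∧
    (∀ i, (N i).FG ∧ IsIndecomposableModule R (N i)) ∧
    (∀ i j, Nonempty ((N i) ≃ₗ[R] (N j)) → i = j) ∧
    ∀ X : ModuleCat.{u} R, Module.Finite R X → IsIndecomposableModule R X →
      ∃ i, Nonempty (X ≃ₗ[R] N i)

/-- A submodule is essential if it meets every nonzero submodule nontrivially. -/
def IsEssentialSubmodule {M : Type*} [AddCommGroup M] [Module R M] (N : Submodule R M) : Prop :=
  ∀ K : Submodule R M, K ≠ ⊥ → N ⊓ K ≠ ⊥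

/-- `E` is an injective hull of `S`: `E` is injective and contains a copy of `S` as an essential
submodule. -/
def IsInjectiveHullOf (E S : Type*) [AddCommGroup E] [Module R E] [AddCommGroup S]
    [Module R S] : Prop :=
  Module.Injective R E ∧
    ∃ j : S →ₗ[R] E, Function.Injective j ∧ IsEssentialSubmodule R (LinearMap.range j)

end Defs

section EndOp

variable {Λ : Type u} [Ring Λ] (V W : Type u) [AddCommGroup V] [Module Λ V]
  [AddCommGroup W] [Module Λ W]

/-- `Hom_Λ(V, W)` is a left module over the paper's `End_Λ(V)`, i.e. over
`(Module.End Λ V)ᵐᵒᵖ`, via composition: `r • α = α ∘ r`. -/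
instance homModuleEndOp : Module (Module.End Λ V)ᵐᵒᵖ (V →ₗ[Λ] W) where
  smul r α := α ∘ₗ r.unop
  one_smul α := by ext v; rfl
  mul_smul r s α := by ext v; rfl
  smul_zero r := by ext v; rfl
  smul_add r α β := by ext v; rfl
  add_smul r s α := by ext v; exact α.map_add _ _
  zero_smul α := by ext v; exact α.map_zero

@[simp] lemma endOp_smul_apply (r : (Module.End Λ V)ᵐᵒᵖ) (α : V →ₗ[Λ] W) (v : V) :
    (r • α) v = α (r.unop v) := rfl

end EndOp

section Faithful

variable (R : Type u) [Ring R]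

/-- A module is faithful if its annihilator is zero. -/
def IsFaithfulModule (M : Type*) [AddCommGroup M] [Module R M] : Prop :=
  ∀ r : R, (∀ m : M, r • m = 0) → r = 0

/-- A module is minimal faithful if it is faithful and isomorphic to a direct summand of every
faithful module. -/
def IsMinimalFaithfulModule (M : Type u) [AddCommGroup M] [Module R M] : Prop :=
  IsFaithfulModule R M ∧
    ∀ N : ModuleCat.{u} R, IsFaithfulModule R N →
      ∃ (i : M →ₗ[R] N) (p : N →ₗ[R] M), p ∘ₗ i = LinearMap.id

end Faithful

section Balanced

variable {T : Type*} [Ring T] {M : Type*} [AddCommGroup M] [Module Tᵐᵒᵖ M]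

/-- For a right `T`-module `M` (formalized as a left `Tᵐᵒᵖ`-module) and `r : T`, the action
of `r` on `M` as an `End_T(M)`-linear endomorphism.  Here `S := Module.End Tᵐᵒᵖ M` acts on
`M` by application. -/
def rightSmulEnd (r : T) : M →ₗ[Module.End Tᵐᵒᵖ M] M where
  toFun m := MulOpposite.op r • m
  map_add' m m' := smul_add _ m m'
  map_smul' s m := (map_smul s (MulOpposite.op r) m).symm

end Balanced

open scoped DirectSum

/-!
Only a few properties of `U` and `W` matter. `U` is a generator, because `Λ` is a sum of
indecomposable right ideals, and a cogenerator, because it contains the injective hulls of the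
simple modules, which are finitely generated and indecomposable. `W` is an injective cogenerator
in which every simple module occurs at most once. Both are artinian.

Since `U` is a generator, `Hom(U, -)` preserves injectivity: for a right ideal `I` of `R`, a map
`g : I → Hom(U, W)` induces a well defined map `∑ r u ↦ ∑ g r u` from `I U ⊆ U` to `W`, and if
`α : U → W` extends it then `g r = α r`. So it suffices to embed `Hom(U, W)` in each faithful `N`.
`W` has finitely many simple submodules `T i`; choose `t i ∈ T i` and `τ i : W → U` killing every
`T k` with `k ≠ i` but not `t i`. As `U` is a generator and `N` is faithful, some `n i ∈ N` is not
annihilated by an endomorphism of the form `b i (-) • τ i (t i)` with `b i : U → Λ`. Then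
`f ↦ ∑ n i (τ i ∘ f)` is injective: if `f ≠ 0` then `t i = f y` for some `i` and `y`, and acting
with `b i (-) • y` on the image of `f` gives `n i (b i (-) • τ i (t i)) ≠ 0`.

For balancedness, embed `U` in a finite power of `W` by maps `F k : U → W`. An `S`-linear `h`
commutes with maps `Wⁿ → W`, so every such map vanishing on the image of `F` vanishes on that of
`h F`. As `W` is a cogenerator, `h F = F ∘ r` for some `r`, and `h` is the action of `r` because
every map `U → W` extends along `F`.
-/

section Generators

variable {A : Type u} [Ring A] {U W : Type u} [AddCommGroup U] [Module A U]
  [AddCommGroup W] [Module A W]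

variable (A U) in
/-- `U` is a generator of the category of `A`-modules, expressed by its trace ideal, the sum of
the images of all linear maps `U → A`, being all of `A`. -/
def IsGenerator : Prop :=
  ⨆ f : U →ₗ[A] A, LinearMap.range f = ⊤

variable (A W) in
/-- `W` is a cogenerator of the category of `A`-modules (in its own universe): maps to `W`
separate the elements of every module from zero. -/
def IsCogenerator : Prop :=
  ∀ (X : Type u) [AddCommGroup X] [Module A X] (x : X), x ≠ 0 → ∃ f : X →ₗ[A] W, f x ≠ 0

/-- The socle of `W` contains each simple module with multiplicity at most one, expressed by
isomorphic simple submodules of `W` being equal. -/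
def HasSquarefreeSocle (A W : Type*) [Ring A] [AddCommGroup W] [Module A W] : Prop :=
  ∀ T₁ T₂ : Submodule A W, IsSimpleModule A T₁ → Nonempty (T₁ ≃ₗ[A] T₂) → T₁ = T₂

lemma IsGenerator.exists_smul_ne_zero (hU : IsGenerator A U) {X : Type*} [AddCommGroup X]
    [Module A X] {x : X} (hx : x ≠ 0) : ∃ (f : U →ₗ[A] A) (u : U), f u • x ≠ 0 := by
  by_contra! hzero
  have hker : (⊤ : Submodule A A) ≤ LinearMap.ker (LinearMap.toSpanSingleton A X x) := by
    rw [← hU, iSup_le_iff]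
    rintro f _ ⟨u, rfl⟩
    exact hzero f u
  exact hx (by simpa using hker (Submodule.mem_top (x := 1)))

lemma exists_comp_eq_of_ker_le [Module.Injective A W] {M N : Type u} [AddCommGroup M]
    [Module A M] [AddCommGroup N] [Module A N] {f : M →ₗ[A] N} {g : M →ₗ[A] W}
    (h : LinearMap.ker f ≤ LinearMap.ker g) : ∃ α : N →ₗ[A] W, α ∘ₗ f = g := by
  have hinj : Function.Injective ((LinearMap.ker f).liftQ f le_rfl) :=
    LinearMap.ker_eq_bot.1 (Submodule.ker_liftQ_eq_bot _ _ _ le_rfl)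
  obtain ⟨α, hα⟩ := Module.Injective.extension_property A W _ _ _ hinj
    ((LinearMap.ker f).liftQ g h)
  refine ⟨α, ?_⟩
  rw [← Submodule.liftQ_mkQ (LinearMap.ker f) f le_rfl, ← LinearMap.comp_assoc, hα,
    Submodule.liftQ_mkQ]

end Generators

section InjectiveHom

variable {A : Type u} [Ring A] {U W : Type u} [AddCommGroup U] [Module A U]
  [AddCommGroup W] [Module A W] {I : Ideal (Module.End A U)ᵐᵒᵖ}

/-- The evaluation `∑ r ⊗ u ↦ ∑ r u` of a right ideal `I` of `End U` on `U`. Instead of on the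
tensor product it is defined on finitely supported functions `I → U`. -/
noncomputable def idealEval (I : Ideal (Module.End A U)ᵐᵒᵖ) : (I →₀ U) →ₗ[A] U :=
  Finsupp.lsum ℕ fun r => r.1.unop

/-- The evaluation `∑ r ⊗ u ↦ ∑ g r u` of `g : I → Hom(U, W)` on `U`, with the same domain as
`idealEval`; `g` extends to `End U` once this map factors through `idealEval`. -/
noncomputable def idealHomEval (g : I →ₗ[(Module.End A U)ᵐᵒᵖ] (U →ₗ[A] W)) :
    (I →₀ U) →ₗ[A] W :=
  Finsupp.lsum ℕ fun r => g r

lemma exists_mem_eq_smulRight_idealEval (g : I →ₗ[(Module.End A U)ᵐᵒᵖ] (U →ₗ[A] W))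
    (b : U →ₗ[A] A) (x : I →₀ U) :
    ∃ s : I, s.1 = MulOpposite.op (b.smulRight (idealEval I x)) ∧
      g s = b.smulRight (idealHomEval g x) := by
  induction x using Finsupp.induction_linear with
  | zero => exact ⟨0, by simp, by simp⟩
  | add x y hx hy =>
    obtain ⟨s, hs, hgs⟩ := hx
    obtain ⟨t, ht, hgt⟩ := hy
    refine ⟨s + t, ?_, ?_⟩
    · rw [Submodule.coe_add, hs, ht, map_add, ← MulOpposite.op_add]
      congr 1; ext v; simp
    · rw [map_add, hgs, hgt, map_add]
      ext v; simp
  | single r u =>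
    refine ⟨MulOpposite.op (b.smulRight u) • r, ?_, ?_⟩
    · apply MulOpposite.unop_injective
      ext v
      simp [idealEval]
    · rw [map_smul]
      ext v
      simp [idealHomEval]

lemma ker_idealEval_le (hU : IsGenerator A U)
    (g : I →ₗ[(Module.End A U)ᵐᵒᵖ] (U →ₗ[A] W)) :
    LinearMap.ker (idealEval I) ≤ LinearMap.ker (idealHomEval g) := by
  intro x hx
  by_contra hgx
  obtain ⟨b, v, hbv⟩ := hU.exists_smul_ne_zero hgx
  obtain ⟨s, hs, hgs⟩ := exists_mem_eq_smulRight_idealEval g b x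
  have hs_zero : s = 0 := by
    apply Subtype.ext
    rw [hs, LinearMap.mem_ker.1 hx]
    simp
  apply hbv
  rw [← LinearMap.smulRight_apply, ← hgs, hs_zero, map_zero, LinearMap.zero_apply]

theorem IsGenerator.injective_hom (hU : IsGenerator A U) [Module.Injective A W] :
    Module.Injective (Module.End A U)ᵐᵒᵖ (U →ₗ[A] W) := by
  refine Module.Baer.injective fun I g => ?_
  obtain ⟨α, hα⟩ := exists_comp_eq_of_ker_le (ker_idealEval_le hU g)
  refine ⟨LinearMap.toSpanSingleton _ _ α, fun r hr => LinearMap.ext fun u => ?_⟩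
  simpa [idealEval, idealHomEval] using
    LinearMap.congr_fun hα (Finsupp.single (⟨r, hr⟩ : I) u)

end InjectiveHom

section MinimalFaithful

variable {A : Type u} [Ring A] {U W : Type u} [AddCommGroup U] [Module A U]
  [AddCommGroup W] [Module A W]

theorem IsCogenerator.isFaithfulModule_hom (hW : IsCogenerator A W) :
    IsFaithfulModule (Module.End A U)ᵐᵒᵖ (U →ₗ[A] W) := by
  intro r hr
  apply MulOpposite.unop_injective
  ext u
  by_contra hu
  obtain ⟨f, hf⟩ := hW U _ hu
  exact hf (LinearMap.congr_fun (hr f) u)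

lemma HasSquarefreeSocle.not_le_sSup (hW : HasSquarefreeSocle A W) {T : Submodule A W}
    (hT : IsAtom T) : ¬ T ≤ sSup ({T' | IsAtom T'} \ {T}) := by
  intro hle
  have hsimple : ∀ m : ({T' | IsAtom T'} \ {T} : Set (Submodule A W)), IsSimpleModule A m.1 :=
    fun m => isSimpleModule_iff_isAtom.2 m.2.1
  have hTsimple : IsSimpleModule A T := isSimpleModule_iff_isAtom.2 hT
  obtain ⟨T', hT', e⟩ := T.linearEquiv_of_le_sSup _ hle
  exact hT'.2 (hW T T' hTsimple e).symm

lemma HasSquarefreeSocle.finite_atoms [IsArtinian A W] (hW : HasSquarefreeSocle A W) :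
    {T : Submodule A W | IsAtom T}.Finite := by
  refine WellFoundedLT.finite_of_sSupIndep fun T hT => ?_
  exact (hT.not_le_iff_disjoint).1 (hW.not_le_sSup hT)

/-- The elements `t i` of `W` and the maps `τ i : W → U` are dual up to nonzero values: `τ i`
kills `t k` exactly for `k ≠ i`. For `W` with squarefree socle, this is used with one `t i` in
each simple submodule of `W`. -/
structure IsDualFamily {ι : Type*} (t : ι → W) (τ : ι → W →ₗ[A] U) : Prop where
  apply_self_ne_zero : ∀ i, τ i (t i) ≠ 0
  apply_eq_zero : ∀ i k, k ≠ i → τ k (t i) = 0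

lemma HasSquarefreeSocle.exists_isDualFamily [IsArtinian A W] (hW : HasSquarefreeSocle A W)
    (hU : IsCogenerator A U) :
    ∃ (t : {T : Submodule A W | IsAtom T} → W) (τ : {T : Submodule A W | IsAtom T} → W →ₗ[A] U),
      IsDualFamily t τ ∧ ∀ T, t T ∈ T.1 := by
  have hexists (T : {T : Submodule A W | IsAtom T}) : ∃ (t : W) (τ : W →ₗ[A] U),
      t ∈ T.1 ∧ τ t ≠ 0 ∧ ∀ T', IsAtom T' → T' ≠ T.1 → T' ≤ LinearMap.ker τ := by
    obtain ⟨t, htT, ht⟩ := SetLike.not_le_iff_exists.1 (hW.not_le_sSup T.2)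
    obtain ⟨f, hf⟩ := hU (W ⧸ sSup ({T' | IsAtom T'} \ {T.1})) (Submodule.Quotient.mk t)
      (by rwa [Ne, Submodule.Quotient.mk_eq_zero])
    refine ⟨t, f ∘ₗ Submodule.mkQ _, htT, hf, fun T' hT' hne => ?_⟩
    calc T' ≤ sSup ({T' | IsAtom T'} \ {T.1}) := le_sSup ⟨hT', hne⟩
      _ = LinearMap.ker (Submodule.mkQ _) := (Submodule.ker_mkQ _).symm
      _ ≤ _ := LinearMap.ker_le_ker_comp _ _
  choose t τ ht hτ hker using hexists
  refine ⟨t, τ, ⟨hτ, fun i k hki => ?_⟩, ht⟩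
  exact hker k i i.2 (fun h => hki (Subtype.ext h.symm)) (ht i)

variable {N : Type*} [AddCommGroup N] [Module (Module.End A U)ᵐᵒᵖ N]

/-- The map `Hom(U, W) → N`, `f ↦ n (τ ∘ f)`, of right `End U`-modules attached to a map
`τ : W → U` and an element `n` of `N`. -/
def compSMul (τ : W →ₗ[A] U) (n : N) : (U →ₗ[A] W) →ₗ[(Module.End A U)ᵐᵒᵖ] N where
  toFun f := MulOpposite.op (τ ∘ₗ f : Module.End A U) • n
  map_add' f g := by rw [LinearMap.comp_add, MulOpposite.op_add, add_smul]
  map_smul' r f := mul_smul r (MulOpposite.op (τ ∘ₗ f : Module.End A U)) n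

lemma comp_smulRight {M : Type*} [AddCommGroup M] [Module A M] (f : M →ₗ[A] W)
    (b : U →ₗ[A] A) (x : M) : f ∘ₗ b.smulRight x = b.smulRight (f x) := by
  ext v
  simp

lemma compSMul_smulRight (τ : W →ₗ[A] U) (n : N) (b : U →ₗ[A] A) (w : W) :
    compSMul τ n (b.smulRight w) =
      MulOpposite.op (b.smulRight (τ w) : Module.End A U) • n := by
  change MulOpposite.op (τ ∘ₗ b.smulRight w : Module.End A U) • n = _
  rw [comp_smulRight]

lemma IsGenerator.exists_smul_smulRight_ne_zero (hU : IsGenerator A U)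
    (hN : IsFaithfulModule (Module.End A U)ᵐᵒᵖ N) {u : U} (hu : u ≠ 0) :
    ∃ (b : U →ₗ[A] A) (n : N), MulOpposite.op (b.smulRight u : Module.End A U) • n ≠ 0 := by
  obtain ⟨b, v, hbv⟩ := hU.exists_smul_ne_zero hu
  by_contra! hzero
  have hb : b.smulRight u = 0 := MulOpposite.op_injective (hN _ (hzero b))
  exact hbv (LinearMap.congr_fun hb v)

lemma IsDualFamily.exists_injective_of_isFaithfulModule {ι : Type*} [Finite ι] {t : ι → W}
    {τ : ι → W →ₗ[A] U} (hτ : IsDualFamily t τ)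
    (ht : ∀ K : Submodule A W, K ≠ ⊥ → ∃ i, t i ∈ K) (hU : IsGenerator A U)
    (hN : IsFaithfulModule (Module.End A U)ᵐᵒᵖ N) :
    ∃ φ : (U →ₗ[A] W) →ₗ[(Module.End A U)ᵐᵒᵖ] N, Function.Injective φ := by
  have := Fintype.ofFinite ι
  choose b n hbn using fun i =>
    hU.exists_smul_smulRight_ne_zero hN (hτ.apply_self_ne_zero i)
  refine ⟨∑ i, compSMul (τ i) (n i), (injective_iff_map_eq_zero _).2 fun f hf => ?_⟩
  by_contra hf_zero
  obtain ⟨i, y, hy⟩ := ht (LinearMap.range f) (by rwa [Ne, LinearMap.range_eq_bot])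
  have hsmul : MulOpposite.op ((b i).smulRight y : Module.End A U) • f =
      (b i).smulRight (t i) := by
    rw [← hy]
    exact comp_smulRight _ _ _
  apply hbn i
  calc MulOpposite.op ((b i).smulRight (τ i (t i)) : Module.End A U) • n i
      = (∑ k, compSMul (τ k) (n k)) ((b i).smulRight (t i)) := by
        rw [LinearMap.sum_apply, Finset.sum_eq_single i _ (by simp), compSMul_smulRight]
        intro k _ hk
        rw [compSMul_smulRight, hτ.apply_eq_zero i k hk, LinearMap.smulRight_zero,
          MulOpposite.op_zero, zero_smul]
    _ = 0 := by rw [← hsmul, map_smul, hf, smul_zero]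

theorem isMinimalFaithfulModule_hom [IsArtinian A W] [Module.Injective A W]
    (hU : IsGenerator A U) (hU' : IsCogenerator A U) (hW : IsCogenerator A W)
    (hsoc : HasSquarefreeSocle A W) :
    IsMinimalFaithfulModule (Module.End A U)ᵐᵒᵖ (U →ₗ[A] W) := by
  refine ⟨hW.isFaithfulModule_hom, fun N hN => ?_⟩
  obtain ⟨t, τ, hτ, ht⟩ := hsoc.exists_isDualFamily hU'
  have := hsoc.finite_atoms.to_subtype
  have hess (K : Submodule A W) (hK : K ≠ ⊥) : ∃ T, t T ∈ K := by
    obtain ⟨T, hT, hTK⟩ := (IsAtomic.eq_bot_or_exists_atom_le K).resolve_left hK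
    exact ⟨⟨T, hT⟩, hTK (ht ⟨T, hT⟩)⟩
  obtain ⟨φ, hφ⟩ := hτ.exists_injective_of_isFaithfulModule hess hU hN
  have := hU.injective_hom (W := W)
  obtain ⟨p, hp⟩ := Module.Injective.extension_property _ _ _ _ φ hφ LinearMap.id
  exact ⟨φ, p, hp⟩

end MinimalFaithful

section Balanced

variable {A : Type u} [Ring A] {U W : Type u} [AddCommGroup U] [Module A U]
  [AddCommGroup W] [Module A W]

lemma IsCogenerator.exists_injective_pi [IsArtinian A U] (hW : IsCogenerator A W) :
    ∃ s : Finset (U →ₗ[A] W),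
      Function.Injective (LinearMap.pi fun f : s => (f : U →ₗ[A] W)) := by
  obtain ⟨s, hs⟩ := Finset.exists_inf_le (LinearMap.ker : (U →ₗ[A] W) → Submodule A U)
  refine ⟨s, (injective_iff_map_eq_zero _).2 fun u hu => ?_⟩
  have hu_mem : u ∈ s.inf LinearMap.ker :=
    Submodule.mem_finsetInf.2 fun f hf => congr_fun hu ⟨f, hf⟩
  by_contra hne
  obtain ⟨f, hf⟩ := hW U u hne
  exact hf (hs f hu_mem)

variable (U) in
/-- Postcomposition with `β : W → W` as an endomorphism of the right `End U`-module
`Hom(U, W)`. -/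
def postcompEnd (β : W →ₗ[A] W) : Module.End (Module.End A U)ᵐᵒᵖ (U →ₗ[A] W) where
  toFun f := β ∘ₗ f
  map_add' f g := LinearMap.comp_add f g β
  map_smul' _ _ := rfl

lemma map_comp_pi
    (h : (U →ₗ[A] W) →ₗ[Module.End (Module.End A U)ᵐᵒᵖ (U →ₗ[A] W)] (U →ₗ[A] W))
    {κ : Type*} [Finite κ] (F : κ → U →ₗ[A] W) (β : (κ → W) →ₗ[A] W) :
    h (β ∘ₗ LinearMap.pi F) = β ∘ₗ LinearMap.pi fun k => h (F k) := by
  classical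
  have := Fintype.ofFinite κ
  obtain ⟨g, rfl⟩ := (LinearMap.lsum A (fun _ : κ => W) ℕ).surjective β
  have lsum_comp_pi (K : κ → U →ₗ[A] W) :
      LinearMap.lsum A (fun _ : κ => W) ℕ g ∘ₗ LinearMap.pi K = ∑ k, g k ∘ₗ K k := by
    ext u
    simp
  rw [lsum_comp_pi, lsum_comp_pi, map_sum]
  exact Finset.sum_congr rfl fun k _ => map_smul h (postcompEnd U (g k)) (F k)

lemma IsCogenerator.range_pi_map_le (hW : IsCogenerator A W)
    (h : (U →ₗ[A] W) →ₗ[Module.End (Module.End A U)ᵐᵒᵖ (U →ₗ[A] W)] (U →ₗ[A] W))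
    {κ : Type u} [Finite κ] (F : κ → U →ₗ[A] W) :
    LinearMap.range (LinearMap.pi fun k => h (F k)) ≤ LinearMap.range (LinearMap.pi F) := by
  rintro _ ⟨u, rfl⟩
  by_contra hu
  obtain ⟨γ, hγ⟩ := hW ((κ → W) ⧸ LinearMap.range (LinearMap.pi F))
    (Submodule.Quotient.mk (LinearMap.pi (fun k => h (F k)) u))
    (by rwa [Ne, Submodule.Quotient.mk_eq_zero])
  have hzero : (γ ∘ₗ Submodule.mkQ _) ∘ₗ LinearMap.pi F = 0 := by
    rw [LinearMap.comp_assoc, LinearMap.range_mkQ_comp, LinearMap.comp_zero]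
  have hmap := map_comp_pi h F (γ ∘ₗ Submodule.mkQ _)
  rw [hzero, map_zero] at hmap
  exact hγ (LinearMap.congr_fun hmap u).symm

theorem IsCogenerator.surjective_rightSmulEnd [IsArtinian A U] [Module.Injective A W]
    (hW : IsCogenerator A W) :
    Function.Surjective (fun r : Module.End A U => rightSmulEnd (M := U →ₗ[A] W) r) := by
  intro h
  obtain ⟨s, hs⟩ := hW.exists_injective_pi (U := U)
  set F : U →ₗ[A] (s → W) := LinearMap.pi fun f => (f : U →ₗ[A] W)
  set H : U →ₗ[A] (s → W) := LinearMap.pi fun f => h f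
  obtain ⟨r, hr⟩ : ∃ r : Module.End A U, F ∘ₗ r = H :=
    ⟨(LinearEquiv.ofInjective F hs).symm ∘ₗ
        H.codRestrict (LinearMap.range F) fun u => hW.range_pi_map_le h _ ⟨u, rfl⟩,
      LinearMap.ext fun u => LinearEquiv.ofInjective_symm_apply F (h := hs) _⟩
  refine ⟨r, LinearMap.ext fun f => ?_⟩
  obtain ⟨β, hβ⟩ := Module.Injective.extension_property A W _ _ F hs f
  calc f ∘ₗ r = β ∘ₗ (F ∘ₗ r) := by rw [← LinearMap.comp_assoc, hβ]
    _ = β ∘ₗ H := by rw [hr]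
    _ = h (β ∘ₗ F) := (map_comp_pi h _ β).symm
    _ = h f := by rw [hβ]

end Balanced

section Indecomposable

variable {A : Type u} [Ring A]

lemma isIndecomposableModule_of_isSimpleModule (X : Type*) [AddCommGroup X] [Module A X]
    [IsSimpleModule A X] : IsIndecomposableModule A X := by
  refine ⟨IsSimpleModule.nontrivial A X, fun N₁ N₂ h => ?_⟩
  obtain rfl | rfl := eq_bot_or_eq_top N₁
  · exact Or.inl rfl
  · exact Or.inr (eq_bot_of_top_isCompl h)

lemma le_sSup_isIndecomposableModule {X : Type*} [AddCommGroup X] [Module A X] [IsArtinian A X]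
    (K : Submodule A X) : K ≤ sSup {N : Submodule A X | IsIndecomposableModule A N} := by
  induction K using WellFoundedLT.induction with
  | ind K ih =>
    by_cases hK : IsIndecomposableModule A K
    · exact le_sSup hK
    obtain rfl | hK_ne := eq_or_ne K ⊥
    · exact bot_le
    have hK_nontrivial : Nontrivial K := Submodule.nontrivial_iff_ne_bot.2 hK_ne
    obtain ⟨N₁, N₂, hN, hN₁, hN₂⟩ :
        ∃ N₁ N₂ : Submodule A K, IsCompl N₁ N₂ ∧ N₁ ≠ ⊥ ∧ N₂ ≠ ⊥ := by
      simpa [IsIndecomposableModule, hK_nontrivial] using hK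
    have map_lt {P Q : Submodule A K} (hPQ : IsCompl P Q) (hQ : Q ≠ ⊥) :
        P.map K.subtype < K := by
      have hP : P < ⊤ := lt_top_iff_ne_top.2 fun h => hQ (eq_bot_of_top_isCompl (h ▸ hPQ))
      simpa using Submodule.map_strictMono_of_injective K.injective_subtype hP
    calc K = (N₁ ⊔ N₂).map K.subtype := by rw [hN.sup_eq_top, Submodule.map_subtype_top]
      _ = N₁.map K.subtype ⊔ N₂.map K.subtype := Submodule.map_sup _ _ _
      _ ≤ _ := sup_le (ih _ (map_lt hN hN₂)) (ih _ (map_lt hN.symm hN₁))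

lemma isGenerator_of_isIndecomposableModule [IsArtinianRing A] {U : Type u} [AddCommGroup U]
    [Module A U] (hU : ∀ N : Submodule A A, IsIndecomposableModule A N →
      ∃ f : U →ₗ[A] N, Function.Surjective f) : IsGenerator A U := by
  refine top_le_iff.1 ((le_sSup_isIndecomposableModule ⊤).trans (sSup_le fun N hN => ?_))
  obtain ⟨f, hf⟩ := hU N hN
  calc N = LinearMap.range (N.subtype ∘ₗ f) := by
        rw [LinearMap.range_comp_of_range_eq_top _ (LinearMap.range_eq_top.2 hf),
          Submodule.range_subtype]
    _ ≤ _ := le_iSup (fun f : U →ₗ[A] A => LinearMap.range f) _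

lemma IsInternalDirectSum.exists_comp_subtype_eq_id {ι M : Type*} [AddCommGroup M] [Module A M]
    {N : ι → Submodule A M} (hN : IsInternalDirectSum A N) (i : ι) :
    ∃ p : M →ₗ[A] N i, p ∘ₗ (N i).subtype = LinearMap.id := by
  have hcompl : IsCompl (N i) (⨆ (k) (_ : k ≠ i), N k) :=
    ⟨hN.1 i, codisjoint_iff.2 (by rw [← iSup_split_single, hN.2])⟩
  exact ⟨_, Submodule.projectionOnto_comp_subtype hcompl⟩

variable {U : Type u} [AddCommGroup U] [Module A U]

lemma IsSumOfAllIndecomposables.exists_comp_eq_id (hU : IsSumOfAllIndecomposables A U)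
    {X : Type u} [AddCommGroup X] [Module A X] [Module.Finite A X]
    (hX : IsIndecomposableModule A X) :
    ∃ (i : X →ₗ[A] U) (p : U →ₗ[A] X), p ∘ₗ i = LinearMap.id := by
  obtain ⟨ι, N, hN, -, -, hcomplete⟩ := hU
  obtain ⟨k, ⟨e⟩⟩ := hcomplete (ModuleCat.of A X) ‹_› hX
  obtain ⟨p, hp⟩ := hN.exists_comp_subtype_eq_id k
  refine ⟨(N k).subtype ∘ₗ e, e.symm ∘ₗ p, LinearMap.ext fun x => ?_⟩
  exact (congr_arg e.symm (LinearMap.congr_fun hp (e x))).trans (e.symm_apply_apply x)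

theorem IsSumOfAllIndecomposables.isGenerator [IsArtinianRing A]
    (hU : IsSumOfAllIndecomposables A U) : IsGenerator A U := by
  refine isGenerator_of_isIndecomposableModule fun N hN => ?_
  obtain ⟨i, p, hp⟩ := hU.exists_comp_eq_id hN
  exact ⟨p, fun x => ⟨i x, LinearMap.congr_fun hp x⟩⟩

lemma HasFiniteRepresentationType.finite (hA : HasFiniteRepresentationType A) {ι : Type*}
    {X : ι → Type u} [∀ i, AddCommGroup (X i)] [∀ i, Module A (X i)]
    [∀ i, Module.Finite A (X i)] (hX : ∀ i, IsIndecomposableModule A (X i))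
    (hirr : ∀ i j, Nonempty (X i ≃ₗ[A] X j) → i = j) : Finite ι := by
  obtain ⟨-, n, M, -, hM⟩ := hA
  choose f e using fun i => hM (ModuleCat.of A (X i)) inferInstance (hX i)
  refine Finite.of_injective f fun i j hij => hirr i j ?_
  obtain ⟨ei⟩ := e i
  obtain ⟨ej⟩ := e j
  rw [← hij] at ej
  exact ⟨ei.trans ej.symm⟩

lemma IsSumOfAllIndecomposables.finite (hU : IsSumOfAllIndecomposables A U)
    (hA : HasFiniteRepresentationType A) : Module.Finite A U := by
  obtain ⟨ι, N, hN, hfg, hirr, -⟩ := hU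
  have (i : ι) : Module.Finite A (N i) := Module.Finite.iff_fg.2 (hfg i).1
  have : Finite ι := hA.finite (fun i => (hfg i).2) hirr
  exact ⟨hN.2 ▸ Submodule.fg_iSup N fun i => (hfg i).1⟩

end Indecomposable

section EssentialAtoms

variable {A : Type u} [Ring A]

section

variable {E : Type*} [AddCommGroup E] [Module A E] {N : Submodule A E}

lemma IsEssentialSubmodule.le_of_isAtom (hN : IsEssentialSubmodule A N) (hN_atom : IsAtom N)
    {K : Submodule A E} (hK : K ≠ ⊥) : N ≤ K :=
  hN_atom.not_disjoint_iff_le.1 fun h => hN K hK h.eq_bot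

lemma IsEssentialSubmodule.isIndecomposableModule (hN : IsEssentialSubmodule A N)
    (hN_atom : IsAtom N) : IsIndecomposableModule A E := by
  refine ⟨(Submodule.nontrivial_iff A).1 (nontrivial_of_ne N ⊥ hN_atom.1), fun N₁ N₂ h => ?_⟩
  by_contra! hne
  have hN_le : N ≤ N₁ ⊓ N₂ :=
    le_inf (hN.le_of_isAtom hN_atom hne.1) (hN.le_of_isAtom hN_atom hne.2)
  exact hN_atom.1 (le_bot_iff.1 (h.inf_eq_bot ▸ hN_le))

lemma IsEssentialSubmodule.range_eq_of_isSimpleModule (hN : IsEssentialSubmodule A N)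
    (hN_atom : IsAtom N) {T : Type*} [AddCommGroup T] [Module A T] [IsSimpleModule A T]
    {f : T →ₗ[A] E} (hf : f ≠ 0) : LinearMap.range f = N := by
  have hinj : Function.Injective f := f.injective_or_eq_zero.resolve_right hf
  have hrange : IsAtom (LinearMap.range f) :=
    isSimpleModule_iff_isAtom.1 (IsSimpleModule.congr (LinearEquiv.ofInjective f hinj).symm)
  have hle : N ≤ LinearMap.range f :=
    hN.le_of_isAtom hN_atom (by rwa [Ne, LinearMap.range_eq_bot])
  exact ((hrange.le_iff_eq hN_atom.1).1 hle).symm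

lemma IsInjectiveHullOf.exists_isAtom {S : Type*} [AddCommGroup S] [Module A S]
    [IsSimpleModule A S] (hE : IsInjectiveHullOf A E S) :
    ∃ N : Submodule A E, IsAtom N ∧ IsEssentialSubmodule A N ∧ Nonempty (S ≃ₗ[A] N) := by
  obtain ⟨-, j, hj, hess⟩ := hE
  have e : S ≃ₗ[A] LinearMap.range j := LinearEquiv.ofInjective j hj
  exact ⟨_, isSimpleModule_iff_isAtom.1 (IsSimpleModule.congr e.symm), hess, ⟨e⟩⟩

end

section

variable {ι : Type*} {E : ι → Type*} [∀ i, AddCommGroup (E i)] [∀ i, Module A (E i)]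
  {N : ∀ i, Submodule A (E i)}

lemma exists_eq_map_single_of_isSimpleModule [DecidableEq ι]
    (hN : ∀ i, IsEssentialSubmodule A (N i)) (hN_atom : ∀ i, IsAtom (N i))
    (hirr : ∀ i j, Nonempty (N i ≃ₗ[A] N j) → i = j) (T : Submodule A (∀ i, E i))
    [IsSimpleModule A T] : ∃ i, T = (N i).map (LinearMap.single A E i) := by
  let p (i : ι) : T →ₗ[A] E i := (LinearMap.proj i).domRestrict T
  have hequiv (i : ι) (hi : p i ≠ 0) : Nonempty (T ≃ₗ[A] N i) := by
    rw [← (hN i).range_eq_of_isSimpleModule (hN_atom i) hi]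
    exact ⟨LinearEquiv.ofInjective _ ((p i).injective_or_eq_zero.resolve_right hi)⟩
  obtain ⟨i, hi⟩ : ∃ i, p i ≠ 0 := by
    by_contra! hzero
    have := IsSimpleModule.nontrivial A T
    obtain ⟨t, ht⟩ := exists_ne (0 : T)
    exact ht (Subtype.ext (funext fun i => LinearMap.congr_fun (hzero i) t))
  have hp (k : ι) (hk : k ≠ i) : p k = 0 := by
    by_contra hk_ne
    obtain ⟨e⟩ := hequiv i hi
    obtain ⟨e'⟩ := hequiv k hk_ne
    exact hk (hirr k i ⟨e'.symm.trans e⟩)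
  have hsingle : LinearMap.single A E i ∘ₗ p i = T.subtype := by
    ext t k
    obtain rfl | hk := eq_or_ne k i
    · simp [p]
    · simpa [hk, p] using (LinearMap.congr_fun (hp k hk) t).symm
  refine ⟨i, ?_⟩
  rw [← (hN i).range_eq_of_isSimpleModule (hN_atom i) hi, ← LinearMap.range_comp, hsingle,
    Submodule.range_subtype]

lemma hasSquarefreeSocle_pi (hN : ∀ i, IsEssentialSubmodule A (N i))
    (hN_atom : ∀ i, IsAtom (N i)) (hirr : ∀ i j, Nonempty (N i ≃ₗ[A] N j) → i = j) :
    HasSquarefreeSocle A (∀ i, E i) := by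
  classical
  rintro T₁ T₂ hT₁ ⟨e⟩
  have : IsSimpleModule A T₂ := IsSimpleModule.congr e.symm
  obtain ⟨i, rfl⟩ := exists_eq_map_single_of_isSimpleModule hN hN_atom hirr T₁
  obtain ⟨k, rfl⟩ := exists_eq_map_single_of_isSimpleModule hN hN_atom hirr T₂
  have equivMap (i : ι) : N i ≃ₗ[A] (N i).map (LinearMap.single A E i) :=
    Submodule.equivMapOfInjective _ (Pi.single_injective i) _
  obtain rfl := hirr i k ⟨(equivMap i).trans (e.trans (equivMap k).symm)⟩
  rfl

end

lemma HasSquarefreeSocle.of_injective {V W : Type*} [AddCommGroup V] [Module A V]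
    [AddCommGroup W] [Module A W] (hV : HasSquarefreeSocle A V) (f : W →ₗ[A] V)
    (hf : Function.Injective f) : HasSquarefreeSocle A W := by
  rintro T₁ T₂ hT₁ ⟨e⟩
  have equivMap (T : Submodule A W) : T ≃ₗ[A] T.map f := Submodule.equivMapOfInjective f hf T
  exact Submodule.map_injective_of_injective hf <| hV _ _ (IsSimpleModule.congr (equivMap T₁).symm)
    ⟨(equivMap T₁).symm.trans (e.trans (equivMap T₂))⟩

end EssentialAtoms

section Hulls

variable {A : Type u} [Ring A] {W : Type u} [AddCommGroup W] [Module A W]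

lemma isCogenerator_of_isSimpleModule [Module.Injective A W]
    (hW : ∀ (X : Type u) [AddCommGroup X] [Module A X] [IsSimpleModule A X],
      ∃ f : X →ₗ[A] W, f ≠ 0) : IsCogenerator A W := by
  intro X _ _ x hx
  have : Nontrivial (Submodule.span A {x}) :=
    Submodule.nontrivial_iff_ne_bot.2 (by rwa [Ne, Submodule.span_singleton_eq_bot])
  obtain ⟨m, hm, -⟩ := (eq_top_or_exists_le_coatom
    (⊥ : Submodule A (Submodule.span A {x}))).resolve_left bot_ne_top
  have := isSimpleModule_iff_isCoatom.2 hm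
  obtain ⟨f, hf⟩ := hW (Submodule.span A {x} ⧸ m)
  obtain ⟨g, hg⟩ := Module.Injective.extension_property A W _ _ (Submodule.span A {x}).subtype
    (Submodule.injective_subtype _) (f ∘ₗ m.mkQ)
  refine ⟨g, fun hgx => hf ?_⟩
  have hspan : Submodule.span A {x} ≤ LinearMap.ker g := by simpa using hgx
  rw [← LinearMap.cancel_right m.mkQ_surjective, ← hg, LinearMap.zero_comp]
  exact LinearMap.ext fun y => hspan y.2

variable {ι : Type u} {E S : ι → Type u} [∀ i, AddCommGroup (E i)] [∀ i, Module A (E i)]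
  [∀ i, AddCommGroup (S i)] [∀ i, Module A (S i)]

lemma injective_of_linearEquiv_pi [∀ i, Module.Injective A (E i)] (e : W ≃ₗ[A] ∀ i, E i) :
    Module.Injective A W :=
  Module.Baer.injective <| Module.Baer.of_equiv e.symm <|
    Module.Baer.of_injective (Module.Injective.pi A E)

theorem hasSquarefreeSocle_of_isInjectiveHullOf [∀ i, IsSimpleModule A (S i)]
    (hirr : ∀ i j, Nonempty (S i ≃ₗ[A] S j) → i = j) (hE : ∀ i, IsInjectiveHullOf A (E i) (S i))
    (e : W ≃ₗ[A] ∀ i, E i) : HasSquarefreeSocle A W := by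
  choose N hN_atom hN eN using fun i => (hE i).exists_isAtom
  refine (hasSquarefreeSocle_pi hN hN_atom ?_).of_injective e.toLinearMap e.injective
  rintro i k ⟨eik⟩
  obtain ⟨ei⟩ := eN i
  obtain ⟨ek⟩ := eN k
  exact hirr i k ⟨ei.trans (eik.trans ek.symm)⟩

theorem isCogenerator_of_isInjectiveHullOf [Module.Injective A W]
    (hcomplete : ∀ X : ModuleCat.{u} A, IsSimpleModule A X → ∃ i, Nonempty (X ≃ₗ[A] S i))
    (hE : ∀ i, IsInjectiveHullOf A (E i) (S i)) (e : W ≃ₗ[A] ∀ i, E i) : IsCogenerator A W := by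
  classical
  refine isCogenerator_of_isSimpleModule fun X _ _ hX => ?_
  obtain ⟨i, ⟨eX⟩⟩ := hcomplete (ModuleCat.of A X) hX
  obtain ⟨-, j, hj, -⟩ := hE i
  have := IsSimpleModule.nontrivial A X
  let f : X →ₗ[A] W := e.symm ∘ₗ LinearMap.single A E i ∘ₗ j ∘ₗ eX
  have hf : Function.Injective f :=
    e.symm.injective.comp ((Pi.single_injective i).comp (hj.comp eX.injective))
  obtain ⟨x, hx⟩ := exists_ne (0 : X)
  exact ⟨f, fun h => hx (hf (by rw [h, LinearMap.zero_apply, LinearMap.zero_apply]))⟩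

lemma IsCogenerator.of_exists_ne_zero {U : Type u} [AddCommGroup U] [Module A U]
    (hW : IsCogenerator A W) (hU : ∀ w : W, w ≠ 0 → ∃ g : W →ₗ[A] U, g w ≠ 0) :
    IsCogenerator A U := by
  intro X _ _ x hx
  obtain ⟨f, hf⟩ := hW X x hx
  obtain ⟨g, hg⟩ := hU _ hf
  exact ⟨g ∘ₗ f, hg⟩

theorem IsSumOfAllIndecomposables.isCogenerator {U : Type u} [AddCommGroup U] [Module A U]
    (hU : IsSumOfAllIndecomposables A U) [Module.Finite A W] (hW : IsCogenerator A W)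
    [∀ i, IsSimpleModule A (S i)] (hE : ∀ i, IsInjectiveHullOf A (E i) (S i))
    (e : W ≃ₗ[A] ∀ i, E i) : IsCogenerator A U := by
  refine hW.of_exists_ne_zero fun w hw => ?_
  obtain ⟨k, hk⟩ : ∃ k, e w k ≠ 0 :=
    Function.ne_iff.1 ((map_ne_zero_iff e e.injective).2 hw)
  obtain ⟨N, hN_atom, hN, -⟩ := (hE k).exists_isAtom
  have : Module.Finite A (E k) := Module.Finite.of_surjective
    ((LinearMap.proj k : (∀ i, E i) →ₗ[A] E k) ∘ₗ e.toLinearMap)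
    ((Function.surjective_eval k).comp e.surjective)
  obtain ⟨i, p, hpi⟩ := hU.exists_comp_eq_id (hN.isIndecomposableModule hN_atom)
  refine ⟨i ∘ₗ LinearMap.proj k ∘ₗ e.toLinearMap, fun h => hk ?_⟩
  have hi : i (e w k) = 0 := h
  calc e w k = p (i (e w k)) := (LinearMap.congr_fun hpi (e w k)).symm
    _ = 0 := by rw [hi, map_zero]

end Hulls

theorem hom_U_W_minimal_faithful_balanced_general {A : Type u} [Ring A] {U W : Type u}
    [AddCommGroup U] [Module A U] [IsArtinian A U] [AddCommGroup W] [Module A W]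
    [IsArtinian A W] [Module.Injective A W] (hU : IsGenerator A U) (hU' : IsCogenerator A U)
    (hW : IsCogenerator A W) (hsoc : HasSquarefreeSocle A W) :
    IsMinimalFaithfulModule (Module.End A U)ᵐᵒᵖ (U →ₗ[A] W) ∧
    Function.Surjective (fun r : Module.End A U => rightSmulEnd (M := U →ₗ[A] W) r) :=
  ⟨isMinimalFaithfulModule_hom hU hU' hW hsoc, hW.surjective_rightSmulEnd⟩

theorem hom_U_W_minimal_faithful_balanced
    (Λ : Type u) [Ring Λ]
    (_hart : IsArtinian Λᵐᵒᵖ Λᵐᵒᵖ)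
    (_hfin : HasFiniteRepresentationType Λᵐᵒᵖ)
    (U : Type u) [AddCommGroup U] [Module Λᵐᵒᵖ U]
    (_hU : IsSumOfAllIndecomposables Λᵐᵒᵖ U)
    -- a complete irredundant set of representatives of the simple right Λ-modules
    (ι : Type u) (S : ι → ModuleCat.{u} Λᵐᵒᵖ)
    (_ : ∀ i, IsSimpleModule Λᵐᵒᵖ (S i))
    (_ : ∀ i j, Nonempty ((S i) ≃ₗ[Λᵐᵒᵖ] (S j)) → i = j)
    (_ : ∀ X : ModuleCat.{u} Λᵐᵒᵖ, IsSimpleModule Λᵐᵒᵖ X → ∃ i, Nonempty (X ≃ₗ[Λᵐᵒᵖ] S i))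
    -- `W`, the direct sum of injective hulls of the simple right Λ-modules, assumed f.g.
    (E : ι → ModuleCat.{u} Λᵐᵒᵖ) (_ : ∀ i, IsInjectiveHullOf Λᵐᵒᵖ (E i) (S i))
    (W : Type u) [AddCommGroup W] [Module Λᵐᵒᵖ W] (_ : Nonempty (W ≃ₗ[Λᵐᵒᵖ] ⨁ i, E i))
    (_hWfg : Module.Finite Λᵐᵒᵖ W) :
    -- `Hom_Λ(U, W)` is a minimal faithful right `R`-module, `R = End_Λ(U)` …
    IsMinimalFaithfulModule (Module.End Λᵐᵒᵖ U)ᵐᵒᵖ (U →ₗ[Λᵐᵒᵖ] W) ∧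
    -- … and it is balanced
    Function.Surjective
      (fun r : Module.End Λᵐᵒᵖ U => rightSmulEnd (M := U →ₗ[Λᵐᵒᵖ] W) r) := by
  classical
  rename_i hirr hcomplete hE _ _ hWE
  have : IsArtinianRing Λᵐᵒᵖ := _hart
  have : Module.Finite Λᵐᵒᵖ U := _hU.finite _hfin
  have : Finite ι := _hfin.finite (fun i => isIndecomposableModule_of_isSimpleModule (S i)) hirr
  have := Fintype.ofFinite ι
  obtain ⟨e⟩ : Nonempty (W ≃ₗ[Λᵐᵒᵖ] ∀ i, E i) :=
    hWE.map fun e => e.trans (DirectSum.linearEquivFunOnFintype Λᵐᵒᵖ ι fun i => E i)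
  have (i : ι) : Module.Injective Λᵐᵒᵖ (E i) := (hE i).1
  have : Module.Injective Λᵐᵒᵖ W := injective_of_linearEquiv_pi e
  have hW : IsCogenerator Λᵐᵒᵖ W := isCogenerator_of_isInjectiveHullOf hcomplete hE e
  exact hom_U_W_minimal_faithful_balanced_general _hU.isGenerator (_hU.isCogenerator hW hE e) hW
    (hasSquarefreeSocle_of_isInjectiveHullOf hirr hE e)
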